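/- arXiv:2603.03869 — 3 statements merged into one kernel-verified Lean document; each statement's English description precedes it below -/
import Mathlib

section
/- Let X be an infinite-dimensional real Banach space. Then for every ε > 0 there exists a map γ : [0,1] → X with Var_γ = 1 and LVar_γ ≤ ε. In particular, LCJ(X) = 0. -/
/-!
Linear part (Dvoretzky–Rogers). An infinite-dimensional `X` contains, for every `ε > 0`, vectors
`u i` with `‖∑ s i • u i‖ ≤ ε * ∑ ‖u i‖` whenever all `|s i| ≤ 1` (`exists_vectors`). Among the
operators `T` of norm at most one from `2k`-dimensional Euclidean space into a subspace of `X`, take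
one of maximal determinant. Maximality forces `‖T e‖ ≥ 1/6` for some unit
vector `e` of every subspace of dimension at least `k`, which yields `k` orthonormal vectors with
`‖T (b i)‖ ≥ 1/6`; the signed sums of the `T (b i)` have norm at most `√k`.

Passage to Lipschitz functions. Let `g x = f (∑ x i • u i)` with `f` `1`-Lipschitz. By Rademacher's
theorem `g` is differentiable almost everywhere, and there the sum of its absolute partial
derivatives is a directional derivative along a sign vector, hence at most `ε * ∑ ‖u i‖`.
Integrating along unit segments and over a large cube (`sum_lintegral_cube_le`), the average over
`x` of `∑ i, |g (x + e i) - g x|` is at most about `ε * ∑ ‖u i‖`, whereas the average of the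
corresponding distances in `X` is `∑ ‖u i‖`. A fine finite net of the cube retains this up to a small
error that is uniform in `f` (`exists_curve_of_vectors`).

From pairs to a curve. The resulting finite weighted family of pairs of points is turned into a
walk that goes back and forth along each pair many times, in proportion to its weight; the cost of
passing from one pair to the next becomes negligible (`exists_curve_of_pairs`). A step function
following the rescaled walk is the required `γ`.
-/

open Set ENNReal

/-- The total variation of `γ` on `[a, b]`:
the supremum over all finite partitions `a = t₀ < t₁ < ⋯ < t_N = b` of
`∑ ρ(γ(t_{i-1}), γ(t_i))`, valued in `[0, ∞]`. -/
noncomputable def Var {M : Type*} [PseudoEMetricSpace M] (a b : ℝ) (γ : ℝ → M) : ℝ≥0∞ :=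
  eVariationOn γ (Set.Icc a b)

/-- The Lipschitz variation of `γ` on `[a, b]`:
`LVar γ = sup { Var (f ∘ γ) : f : M → ℝ is 1-Lipschitz }`. -/
noncomputable def LVar {M : Type*} [PseudoEMetricSpace M] (a b : ℝ) (γ : ℝ → M) : ℝ≥0∞ :=
  ⨆ f : {f : M → ℝ // LipschitzWith 1 f}, Var a b (f.1 ∘ γ)

/-- `LCJ M = inf { LVar γ / Var γ : γ : [a,b] → M, a < b, 0 < Var γ < ∞ }`. -/
noncomputable def LCJ (M : Type*) [PseudoEMetricSpace M] : ℝ≥0∞ :=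
  ⨅ (a : ℝ) (b : ℝ) (_ : a < b) (γ : ℝ → M) (_ : 0 < Var a b γ) (_ : Var a b γ < ⊤),
    LVar a b γ / Var a b γ

namespace LipVar

/-! ### Walks through finitely many points -/

/-- The length of the walk `a, l₀, l₁, …` when a step from `x` to `y` costs `d x y`. -/
def len {X : Type*} (d : X → X → ℝ) : X → List X → ℝ
  | _, [] => 0
  | a, b :: l => d a b + len d b l

/-- `n` round trips `q, p` (starting from `p`), followed by the walk `l`. -/
def zigzag {X : Type*} (p q : X) : ℕ → List X → List X
  | 0, l => l
  | n + 1, l => q :: p :: zigzag p q n l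

/-- The walk that visits the pairs `(p, q)` of the list in order, making `n` round trips between
`p` and `q` for each entry `(p, q, n)`. -/
def walk {X : Type*} : List (X × X × ℕ) → List X
  | [] => []
  | (p, q, n) :: r => p :: zigzag p q n (walk r)

lemma len_zigzag {X : Type*} (d : X → X → ℝ) (p q : X) (n : ℕ) (l : List X) :
    len d p (zigzag p q n l) = n * (d p q + d q p) + len d p l := by
  induction n with
  | zero => simp [zigzag]
  | succ n ih => simp only [zigzag, len, ih]; push_cast; ring

/-- The cost of moving from one pair to the next does not depend on the multiplicities. -/
lemma len_walk {X : Type*} (d : X → X → ℝ) (L : List (X × X × ℕ)) (a : X) :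
    len d a (walk L) = len d a (L.map fun e => e.1) +
      (L.map fun e => (e.2.2 : ℝ) * (d e.1 e.2.1 + d e.2.1 e.1)).sum := by
  induction L generalizing a with
  | nil => simp [walk, len]
  | cons e r ih =>
    obtain ⟨p, q, n⟩ := e
    simp only [walk, len, len_zigzag, ih, List.map_cons, List.sum_cons]
    ring

lemma len_mono {X : Type*} {d d' : X → X → ℝ} (h : ∀ x y, d x y ≤ d' x y) (l : List X) (a : X) :
    len d a l ≤ len d' a l := by
  induction l generalizing a with
  | nil => simp [len]
  | cons b l ih => exact add_le_add (h a b) (ih b)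

lemma len_nonneg {X : Type*} {d : X → X → ℝ} (h : ∀ x y, 0 ≤ d x y) (l : List X) (a : X) :
    0 ≤ len d a l := by
  induction l generalizing a with
  | nil => simp [len]
  | cons b l ih => exact add_nonneg (h a b) (ih b)

lemma len_eq_sum {X : Type*} (d : X → X → ℝ) (l : List X) (a c : X) :
    len d a l = ∑ i ∈ Finset.range l.length,
      d ((a :: l).getD i c) ((a :: l).getD (i + 1) c) := by
  induction l generalizing a with
  | nil => simp [len]
  | cons b l ih =>
    rw [List.length_cons, Finset.sum_range_succ', len, ih b, add_comm]
    simp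

/-- The variation of a step function running through `z 0, …, z N`. -/
lemma Var_step {M : Type*} [PseudoEMetricSpace M] (z : ℕ → M) {N : ℕ} (hN : 0 < N) :
    Var 0 1 (fun t : ℝ => z ⌊(N : ℝ) * t⌋₊) =
      ∑ i ∈ Finset.range N, edist (z i) (z (i + 1)) := by
  have hN' : (0 : ℝ) < N := by exact_mod_cast hN
  have hmono : MonotoneOn (fun t : ℝ => ⌊(N : ℝ) * t⌋₊) (Set.Icc 0 1) := by
    intro s _ t _ hst
    exact Nat.floor_le_floor (mul_le_mul_of_nonneg_left hst hN'.le)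
  have himg : (fun t : ℝ => ⌊(N : ℝ) * t⌋₊) '' Set.Icc 0 1 = Set.Icc 0 N := by
    ext k
    constructor
    · rintro ⟨t, ht, rfl⟩
      refine ⟨Nat.zero_le _, Nat.floor_le_of_le ?_⟩
      nlinarith [ht.2]
    · rintro ⟨-, hk⟩
      have hk' : (k : ℝ) ≤ N := by exact_mod_cast hk
      refine ⟨k / N, ⟨by positivity, (div_le_one hN').2 hk'⟩, ?_⟩
      simp only
      rw [mul_div_cancel₀ _ hN'.ne', Nat.floor_natCast]
  have h1 := eVariationOn.comp_eq_of_monotoneOn z _ hmono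
  rw [himg] at h1
  have h2 := eVariationOn.sum' z (I := id) monotone_id (n := N)
  unfold Var
  refine h1.trans (h2.symm.trans (Finset.sum_congr rfl fun i _ => ?_))
  rw [← eVariationOn.pair]
  congr 1
  ext k
  simp only [id, Set.mem_Icc, Set.mem_insert_iff, Set.mem_singleton_iff]
  omega

/-- A walk along which every `1`-Lipschitz function varies little gives, after rescaling to
length one, the desired curve. -/
lemma exists_curve_of_list {X : Type*} [NormedAddCommGroup X] [NormedSpace ℝ X] (a : X)
    (l : List X) (ε : ℝ) (hS : 0 < len dist a l)
    (h : ∀ f : X → ℝ, LipschitzWith 1 f →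
      len (fun x y => dist (f x) (f y)) a l ≤ ε * len dist a l) :
    ∃ γ : ℝ → X, Var 0 1 γ = 1 ∧ LVar 0 1 γ ≤ ENNReal.ofReal ε := by
  set S := len dist a l with hSdef
  have hl : 0 < l.length := by
    rcases l with _ | ⟨b, l⟩
    · simp [len, S] at hS
    · simp
  let z : ℕ → X := fun i => (a :: l).getD i a
  refine ⟨fun t => S⁻¹ • z ⌊(l.length : ℝ) * t⌋₊, ?_, ?_⟩
  · rw [Var_step (fun i => S⁻¹ • z i) hl]
    simp only [edist_dist]
    rw [← ENNReal.ofReal_sum_of_nonneg (fun _ _ => dist_nonneg)]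
    simp only [dist_smul₀, norm_inv, Real.norm_of_nonneg hS.le, ← Finset.mul_sum]
    rw [← len_eq_sum dist l a a, ← hSdef, inv_mul_cancel₀ hS.ne', ENNReal.ofReal_one]
  · refine iSup_le fun ⟨f, hf⟩ => ?_
    -- `x ↦ S * f (x / S)` is again `1`-Lipschitz.
    have hg : LipschitzWith 1 (fun x => S * f (S⁻¹ • x)) := by
      refine LipschitzWith.of_dist_le_mul fun x y => ?_
      have := hf.dist_le_mul (S⁻¹ • x) (S⁻¹ • y)
      rw [dist_smul₀, norm_inv, Real.norm_of_nonneg hS.le, NNReal.coe_one, one_mul] at this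
      rw [Real.dist_eq, ← mul_sub, abs_mul, abs_of_pos hS, ← Real.dist_eq, NNReal.coe_one, one_mul]
      calc S * dist (f (S⁻¹ • x)) (f (S⁻¹ • y)) ≤ S * (S⁻¹ * dist x y) := by gcongr
        _ = dist x y := by field_simp
    have h2 := h _ hg
    rw [len_eq_sum _ l a a] at h2
    have h3 := Var_step (fun i => f (S⁻¹ • z i)) hl
    refine (le_of_eq h3).trans ?_
    simp only [edist_dist]
    rw [← ENNReal.ofReal_sum_of_nonneg (fun _ _ => dist_nonneg)]
    refine ENNReal.ofReal_le_ofReal ?_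
    refine le_of_mul_le_mul_left ?_ hS
    rw [Finset.mul_sum, mul_comm S ε]
    refine le_trans (le_of_eq (Finset.sum_congr rfl fun i _ => ?_)) h2
    simp only [z, Real.dist_eq]
    rw [← mul_sub, abs_mul, abs_of_pos hS]

/-- A finite weighted family of pairs, on average shrunk by every `1`-Lipschitz function, gives a
curve: make about `M * w j` round trips along the `j`-th pair, with `M` so large that the
moves between different pairs are negligible. -/
lemma exists_curve_of_pairs {X : Type*} [NormedAddCommGroup X] [NormedSpace ℝ X] {ι : Type*}
    (s : Finset ι) (p q : ι → X) (w : ι → ℝ) (hw : ∀ j, 0 ≤ w j) (ε : ℝ) (hε : 0 < ε)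
    (hD : 0 < ∑ j ∈ s, w j * dist (p j) (q j))
    (h : ∀ f : X → ℝ, LipschitzWith 1 f →
      ∑ j ∈ s, w j * dist (f (p j)) (f (q j)) ≤ ε * ∑ j ∈ s, w j * dist (p j) (q j)) :
    ∃ γ : ℝ → X, Var 0 1 γ = 1 ∧ LVar 0 1 γ ≤ ENNReal.ofReal (2 * ε) := by
  set D := ∑ j ∈ s, w j * dist (p j) (q j) with hDdef
  set B := ∑ j ∈ s, dist (p j) (q j) with hBdef
  set C := len dist (0 : X) (s.toList.map p) with hCdef
  obtain ⟨M, hM⟩ := exists_nat_gt ((C + 2 * B) / (2 * ε * D))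
  have hB : 0 ≤ B := Finset.sum_nonneg fun _ _ => dist_nonneg
  have hC : 0 ≤ C := len_nonneg (fun _ _ => dist_nonneg) _ _
  have hM0 : (0 : ℝ) < M := lt_of_le_of_lt (by positivity) hM
  rw [div_lt_iff₀ (by positivity)] at hM
  let L : List (X × X × ℕ) := s.toList.map fun j => (p j, q j, ⌈(M : ℝ) * w j⌉₊)
  have hlen : ∀ d : X → X → ℝ, (∀ x y, d x y = d y x) → len d 0 (walk L) =
      len d 0 (s.toList.map p) + ∑ j ∈ s, (⌈(M : ℝ) * w j⌉₊ : ℝ) * (2 * d (p j) (q j)) := by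
    intro d hd
    rw [len_walk, List.map_map, List.map_map]
    congr 1
    rw [← Finset.sum_map_toList]
    congr 1
    refine List.map_congr_left fun j _ => ?_
    simp only [Function.comp]
    rw [hd (q j) (p j)]
    ring
  have hlow : 2 * M * D ≤ len dist 0 (walk L) := by
    rw [hlen _ dist_comm, hDdef, Finset.mul_sum]
    refine le_trans (Finset.sum_le_sum fun j _ => ?_) (le_add_of_nonneg_left hC)
    have := Nat.le_ceil ((M : ℝ) * w j)
    nlinarith [dist_nonneg (x := p j) (y := q j)]
  refine exists_curve_of_list 0 (walk L) (2 * ε) (lt_of_lt_of_le (by positivity) hlow)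
    fun f hf => ?_
  have hf' : ∀ x y, dist (f x) (f y) ≤ dist x y := fun x y => by simpa using hf.dist_le_mul x y
  rw [hlen _ fun _ _ => dist_comm _ _]
  have h1 : len (fun x y => dist (f x) (f y)) 0 (s.toList.map p) ≤ C := len_mono hf' _ _
  have h2 : ∑ j ∈ s, (⌈(M : ℝ) * w j⌉₊ : ℝ) * (2 * dist (f (p j)) (f (q j))) ≤
      2 * M * (∑ j ∈ s, w j * dist (f (p j)) (f (q j))) + 2 * B := by
    rw [Finset.mul_sum, hBdef, Finset.mul_sum, ← Finset.sum_add_distrib]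
    refine Finset.sum_le_sum fun j _ => ?_
    have h3 := (Nat.ceil_lt_add_one (mul_nonneg hM0.le (hw j))).le
    have h4 := hf' (p j) (q j)
    nlinarith [dist_nonneg (x := f (p j)) (y := f (q j))]
  have h5 := mul_le_mul_of_nonneg_left (h f hf) (by positivity : (0 : ℝ) ≤ 2 * M)
  have h6 := mul_le_mul_of_nonneg_left hlow (by positivity : (0 : ℝ) ≤ 2 * ε)
  nlinarith

/-! ### Averaging over a cube -/

open MeasureTheory

/-- At a point of differentiability, the sum of the absolute values of the partial derivatives is
the derivative in a direction with coordinates `±1` (or `0`). -/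
lemma ae_sum_lineDeriv_le {m : ℕ} {g : (Fin m → ℝ) → ℝ} {K : NNReal} (hg : LipschitzWith K g)
    {κ : ℝ} (hκ : 0 ≤ κ)
    (h : ∀ x s : Fin m → ℝ, (∀ i, |s i| ≤ 1) → ∀ t : ℝ, |g (x + t • s) - g x| ≤ κ * |t|) :
    ∀ᵐ x : Fin m → ℝ, ∑ i, |lineDeriv ℝ g x (Pi.single i 1)| ≤ κ := by
  filter_upwards [hg.ae_differentiableAt (μ := volume)] with x hx
  let s : Fin m → ℝ := fun i => (SignType.sign (fderiv ℝ g x (Pi.single i 1)) : ℝ)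
  have hs : ∀ i, |s i| ≤ 1 := by
    intro i
    simp only [s]
    rcases SignType.sign (fderiv ℝ g x (Pi.single i 1)) with _ | _ | _ <;> simp
  have h1 : ∑ i, |lineDeriv ℝ g x (Pi.single i 1)| = lineDeriv ℝ g x s := by
    have hsum : s = ∑ i, s i • (Pi.single i (1 : ℝ) : Fin m → ℝ) := by
      simp [← Pi.single_smul, Finset.univ_sum_single]
    rw [hx.lineDeriv_eq_fderiv, hsum, map_sum]
    refine Finset.sum_congr rfl fun i _ => ?_
    rw [hx.lineDeriv_eq_fderiv, map_smul, smul_eq_mul, sign_mul_self]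
  rw [h1]
  refine (le_abs_self _).trans ?_
  rw [← Real.norm_eq_abs]
  unfold lineDeriv
  refine norm_deriv_le_of_lip' hκ (Filter.Eventually.of_forall fun t => ?_)
  simpa using h x s hs t

/-- The fundamental theorem of calculus along a segment, as an inequality. -/
lemma enorm_sub_le_lintegral_lineDeriv {m : ℕ} {g : (Fin m → ℝ) → ℝ} {K : NNReal}
    (hg : LipschitzWith K g) (x v : Fin m → ℝ) :
    ‖g (x + v) - g x‖ₑ ≤ ∫⁻ t in Set.Ioc (0 : ℝ) 1, ‖lineDeriv ℝ g (x + t • v) v‖ₑ := by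
  have hline : LipschitzWith (K * ‖v‖₊) (fun t : ℝ => g (x + t • v)) := by
    refine hg.comp (LipschitzWith.of_dist_le_mul fun s t => ?_)
    rw [dist_add_left, dist_eq_norm, ← sub_smul, norm_smul, mul_comm, dist_eq_norm]
    rfl
  have hac : AbsolutelyContinuousOnInterval (fun t : ℝ => g (x + t • v)) 0 1 :=
    hline.lipschitzOnWith.absolutelyContinuousOnInterval
  have hftc := hac.integral_deriv_eq_sub
  have hder : ∀ t : ℝ, deriv (fun t : ℝ => g (x + t • v)) t = lineDeriv ℝ g (x + t • v) v := by
    intro t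
    unfold lineDeriv
    have := deriv_comp_const_add (fun t : ℝ => g (x + t • v)) t 0
    simp only [add_zero] at this
    rw [← this]
    congr 1
    ext r
    rw [add_smul, add_assoc]
  simp only [one_smul, zero_smul, add_zero, hder] at hftc
  rw [← hftc, intervalIntegral.integral_of_le zero_le_one]
  exact enorm_integral_le_lintegral_enorm _

/-- Averaging the previous inequality over a cube and using translation invariance. -/
lemma sum_lintegral_cube_le {m : ℕ} {g : (Fin m → ℝ) → ℝ} {K : NNReal} (hg : LipschitzWith K g)
    {κ : ℝ} (hκ : 0 ≤ κ)
    (h : ∀ x s : Fin m → ℝ, (∀ i, |s i| ≤ 1) → ∀ t : ℝ, |g (x + t • s) - g x| ≤ κ * |t|)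
    (R : ℝ) :
    ∑ i, ∫⁻ x in Metric.closedBall (0 : Fin m → ℝ) R, ‖g (x + Pi.single i 1) - g x‖ₑ ≤
      ENNReal.ofReal κ * volume (Metric.closedBall (0 : Fin m → ℝ) (R + 1)) := by
  have hmeas : ∀ v : Fin m → ℝ, Measurable fun x => lineDeriv ℝ g x v :=
    fun v => measurable_lineDeriv hg.continuous
  have key : ∀ i : Fin m,
      ∫⁻ x in Metric.closedBall (0 : Fin m → ℝ) R, ‖g (x + Pi.single i 1) - g x‖ₑ ≤
      ∫⁻ x in Metric.closedBall (0 : Fin m → ℝ) (R + 1), ‖lineDeriv ℝ g x (Pi.single i 1)‖ₑ := by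
    intro i
    set v : Fin m → ℝ := Pi.single i 1 with hv
    have hvn : ‖v‖ ≤ 1 := by
      refine (pi_norm_le_iff_of_nonneg zero_le_one).2 fun j => ?_
      rw [hv, Pi.single_apply]
      split_ifs <;> simp
    set I := ∫⁻ x in Metric.closedBall (0 : Fin m → ℝ) (R + 1), ‖lineDeriv ℝ g x v‖ₑ
    calc ∫⁻ x in Metric.closedBall (0 : Fin m → ℝ) R, ‖g (x + v) - g x‖ₑ
        ≤ ∫⁻ x in Metric.closedBall (0 : Fin m → ℝ) R,
            ∫⁻ t in Set.Ioc (0 : ℝ) 1, ‖lineDeriv ℝ g (x + t • v) v‖ₑ :=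
          lintegral_mono fun x => enorm_sub_le_lintegral_lineDeriv hg x v
      _ = ∫⁻ t in Set.Ioc (0 : ℝ) 1, ∫⁻ x in Metric.closedBall (0 : Fin m → ℝ) R,
            ‖lineDeriv ℝ g (x + t • v) v‖ₑ := by
          refine lintegral_lintegral_swap (Measurable.aemeasurable ?_)
          have : Measurable fun p : (Fin m → ℝ) × ℝ => p.1 + p.2 • v := by fun_prop
          exact ((hmeas v).comp this).enorm
      _ ≤ ∫⁻ t in Set.Ioc (0 : ℝ) 1, I := by
          refine setLIntegral_mono measurable_const fun t ht => ?_
          simp only [I]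
          rw [← lintegral_indicator Metric.isClosed_closedBall.measurableSet,
            ← lintegral_indicator Metric.isClosed_closedBall.measurableSet,
            ← lintegral_add_right_eq_self (μ := volume) (f := Set.indicator
              (Metric.closedBall (0 : Fin m → ℝ) (R + 1)) _) (t • v)]
          refine lintegral_mono fun x => ?_
          by_cases hx : x ∈ Metric.closedBall (0 : Fin m → ℝ) R
          · have hx' : x + t • v ∈ Metric.closedBall (0 : Fin m → ℝ) (R + 1) := by
              rw [mem_closedBall_zero_iff] at hx ⊢
              refine (norm_add_le _ _).trans (add_le_add hx ?_)
              rw [norm_smul, Real.norm_of_nonneg ht.1.le]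
              exact mul_le_one₀ ht.2 (norm_nonneg _) hvn
            rw [Set.indicator_of_mem hx, Set.indicator_of_mem hx']
          · rw [Set.indicator_of_notMem hx]
            exact zero_le
      _ = I := by simp
  refine (Finset.sum_le_sum fun i _ => key i).trans ?_
  rw [← lintegral_finsetSum _ fun i _ => (hmeas _).enorm]
  rw [← setLIntegral_const]
  refine lintegral_mono_ae (ae_restrict_of_ae ?_)
  filter_upwards [ae_sum_lineDeriv_le hg hκ h] with x hx
  simp only [← ofReal_norm]
  rw [← ENNReal.ofReal_sum_of_nonneg (fun _ _ => norm_nonneg _)]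
  exact ENNReal.ofReal_le_ofReal hx

/-- A simple function moving no point of the cube by more than `δ`. -/
lemma exists_simpleFunc_near {m : ℕ} (R δ : ℝ) (hδ : 0 < δ) :
    ∃ π : SimpleFunc (Fin m → ℝ) (Fin m → ℝ),
      ∀ x ∈ Metric.closedBall (0 : Fin m → ℝ) R, dist (π x) x ≤ δ := by
  let e := TopologicalSpace.denseSeq (Fin m → ℝ)
  have hcover : Metric.closedBall (0 : Fin m → ℝ) R ⊆ ⋃ k, Metric.ball (e k) δ := by
    intro x _
    obtain ⟨k, hk⟩ := (TopologicalSpace.denseRange_denseSeq (Fin m → ℝ)).exists_dist_lt x hδ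
    exact Set.mem_iUnion.2 ⟨k, hk⟩
  obtain ⟨T, hT⟩ := (isCompact_closedBall (0 : Fin m → ℝ) R).elim_finite_subcover _
    (fun k => Metric.isOpen_ball) hcover
  refine ⟨SimpleFunc.nearestPt e (T.sup id), fun x hx => ?_⟩
  obtain ⟨k, hk⟩ := Set.mem_iUnion.1 (hT hx)
  obtain ⟨hkT, hk⟩ := Set.mem_iUnion.1 hk
  have h1 := SimpleFunc.edist_nearestPt_le e x (Finset.le_sup (f := id) hkT)
  rw [edist_dist, edist_dist, ENNReal.ofReal_le_ofReal_iff dist_nonneg] at h1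
  refine h1.trans ?_
  rw [dist_comm]
  exact (Metric.mem_ball.1 hk).le

/-- A large cube whose unit neighbourhood has at most twice its volume. -/
lemma exists_cube (m : ℕ) : ∃ R : ℝ, 0 < R ∧
    volume (Metric.closedBall (0 : Fin m → ℝ) (R + 1)) ≤
      2 * volume (Metric.closedBall (0 : Fin m → ℝ) R) := by
  refine ⟨2 * m + 1, by positivity, ?_⟩
  rw [Real.volume_pi_closedBall _ (by positivity), Real.volume_pi_closedBall _ (by positivity),
    Fintype.card_fin, show (2 : ENNReal) = ENNReal.ofReal 2 by simp,
    ← ENNReal.ofReal_mul (by norm_num)]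
  refine ENNReal.ofReal_le_ofReal ?_
  have hb := one_add_mul_le_pow (a := -(1 / (2 * (m : ℝ) + 2))) (by
    have : 1 / (2 * (m : ℝ) + 2) ≤ 1 := by
      rw [div_le_one (by positivity)]; linarith [(Nat.cast_nonneg m : (0 : ℝ) ≤ m)]
    linarith) m
  have h1 : (1 : ℝ) / 2 ≤ 1 + m * -(1 / (2 * (m : ℝ) + 2)) := by
    have : (m : ℝ) * (1 / (2 * (m : ℝ) + 2)) ≤ 1 / 2 := by
      rw [mul_one_div, div_le_div_iff₀ (by positivity) (by norm_num)]; linarith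
    linarith
  have h2 : 2 * (2 * (m : ℝ) + 1) =
      (1 + -(1 / (2 * (m : ℝ) + 2))) * (2 * (2 * (m : ℝ) + 1 + 1)) := by field_simp; ring
  rw [h2, mul_pow (1 + -(1 / (2 * (m : ℝ) + 2)))]
  have h3 : (0 : ℝ) ≤ (2 * (2 * (m : ℝ) + 1 + 1)) ^ m := by positivity
  nlinarith

/-- Vectors whose signed sums are all short compared with the sum of their norms give a curve: use
the pairs `(φ y, φ y + u i)`, where `φ y = ∑ i, y i • u i` and `y` runs through a fine net of a
large cube. -/
lemma exists_curve_of_vectors {X : Type*} [NormedAddCommGroup X] [NormedSpace ℝ X] {m : ℕ}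
    (u : Fin m → X) (ε : ℝ) (hε : 0 < ε) (hL : 0 < ∑ i, ‖u i‖)
    (h : ∀ s : Fin m → ℝ, (∀ i, |s i| ≤ 1) → ‖∑ i, s i • u i‖ ≤ ε * ∑ i, ‖u i‖) :
    ∃ γ : ℝ → X, Var 0 1 γ = 1 ∧ LVar 0 1 γ ≤ ENNReal.ofReal (2 * (3 * ε)) := by
  set L := ∑ i, ‖u i‖ with hLdef
  obtain ⟨R, hR, hvol⟩ := exists_cube m
  set Q := Metric.closedBall (0 : Fin m → ℝ) R with hQ
  have hQ0 : volume Q ≠ 0 := (Metric.measure_closedBall_pos volume _ hR).ne'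
  have hQtop : volume Q ≠ ⊤ := measure_closedBall_lt_top.ne
  set δ := ε / (2 * m + 1) with hδdef
  have hδ : 0 < δ := by positivity
  have hδm : m * (2 * (δ * L)) ≤ ε * L := by
    have : m * (2 * δ) ≤ ε := by
      rw [hδdef, mul_div_assoc', mul_div_assoc', div_le_iff₀ (by positivity)]
      nlinarith
    nlinarith
  obtain ⟨π, hπ⟩ := exists_simpleFunc_near (m := m) R δ hδ
  let φ : (Fin m → ℝ) → X := fun t => ∑ i, t i • u i
  have hφsub : ∀ x y, φ x - φ y = ∑ i, (x i - y i) • u i := fun x y => by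
    simp [φ, sub_smul, Finset.sum_sub_distrib]
  have hφdist : ∀ x y, dist (φ x) (φ y) ≤ dist x y * L := by
    intro x y
    rw [dist_eq_norm, hφsub, hLdef, Finset.mul_sum]
    refine (norm_sum_le _ _).trans (Finset.sum_le_sum fun i _ => ?_)
    rw [norm_smul]
    gcongr
    rw [← dist_eq_norm]
    exact dist_le_pi_dist x y i
  have hφadd : ∀ x i, φ (x + Pi.single i 1) = φ x + u i := by
    intro x i
    simp [φ, add_smul, Finset.sum_add_distrib, Pi.single_apply]
  let w : (Fin m → ℝ) → ℝ := fun y => (volume.restrict Q (π ⁻¹' {y})).toReal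
  -- Weighted sums over the net are integrals over the cube.
  have hnet : ∀ F : (Fin m → ℝ) → ℝ, (∀ y, 0 ≤ F y) →
      ENNReal.ofReal (∑ y ∈ π.range, w y * F y) = ∫⁻ x in Q, ENNReal.ofReal (F (π x)) := by
    intro F hF
    have h1 := SimpleFunc.map_lintegral (μ := volume.restrict Q) (fun y => ENNReal.ofReal (F y)) π
    rw [← SimpleFunc.lintegral_eq_lintegral] at h1
    rw [ENNReal.ofReal_sum_of_nonneg fun y _ => mul_nonneg ENNReal.toReal_nonneg (hF y)]
    refine Eq.trans (Finset.sum_congr rfl fun y _ => ?_) h1.symm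
    rw [mul_comm, ENNReal.ofReal_mul (hF y), ENNReal.ofReal_toReal]
    exact ne_top_of_le_ne_top hQtop ((measure_mono (Set.subset_univ _)).trans (by simp))
  let s : Finset ((Fin m → ℝ) × Fin m) := π.range ×ˢ Finset.univ
  have hDeq : ∑ j ∈ s, w j.1 * dist (φ j.1) (φ j.1 + u j.2) = ∑ y ∈ π.range, w y * L := by
    rw [Finset.sum_product]
    refine Finset.sum_congr rfl fun y _ => ?_
    simp [hLdef, Finset.mul_sum]
  have hDint : ENNReal.ofReal (∑ y ∈ π.range, w y * L) = ENNReal.ofReal L * volume Q := by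
    rw [hnet (fun _ => L) fun _ => hL.le, setLIntegral_const]
  have hDpos : 0 < ∑ y ∈ π.range, w y * L := by
    rw [← ENNReal.ofReal_pos, hDint]
    exact ENNReal.mul_pos (ENNReal.ofReal_pos.2 hL).ne' hQ0
  refine exists_curve_of_pairs s (fun j => φ j.1) (fun j => φ j.1 + u j.2) (fun j => w j.1)
    (fun _ => ENNReal.toReal_nonneg) (3 * ε) (by positivity) (hDeq ▸ hDpos) fun f hf => ?_
  rw [hDeq]
  have hf' : ∀ x y, dist (f x) (f y) ≤ dist x y := fun x y => by simpa using hf.dist_le_mul x y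
  let g : (Fin m → ℝ) → ℝ := fun x => f (φ x)
  have hgdist : ∀ x y, dist (g x) (g y) ≤ dist x y * L := fun x y =>
    (hf' _ _).trans (hφdist x y)
  have hgL : LipschitzWith ⟨L, hL.le⟩ g :=
    LipschitzWith.of_dist_le_mul fun x y => by rw [mul_comm]; exact hgdist x y
  have hgdir : ∀ x s : Fin m → ℝ, (∀ i, |s i| ≤ 1) → ∀ t : ℝ,
      |g (x + t • s) - g x| ≤ (ε * L) * |t| := by
    intro x s hs t
    rw [← Real.dist_eq]
    refine (hf' _ _).trans ?_
    rw [dist_eq_norm, hφsub]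
    have : ∑ i, ((x + t • s) i - x i) • u i = t • ∑ i, s i • u i := by
      simp [Finset.smul_sum, mul_smul]
    rw [this, norm_smul, Real.norm_eq_abs, mul_comm]
    exact mul_le_mul_of_nonneg_right (h s hs) (abs_nonneg t)
  have hcube := sum_lintegral_cube_le hgL (by positivity) hgdir R
  let F : (Fin m → ℝ) → ℝ := fun y => ∑ i, dist (f (φ y)) (f (φ y + u i))
  have hF : ∀ y, 0 ≤ F y := fun y => Finset.sum_nonneg fun _ _ => dist_nonneg
  have hsumF : ∑ j ∈ s, w j.1 * dist (f (φ j.1)) (f (φ j.1 + u j.2)) =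
      ∑ y ∈ π.range, w y * F y := by
    rw [Finset.sum_product]
    refine Finset.sum_congr rfl fun y _ => ?_
    simp [F, Finset.mul_sum]
  rw [hsumF, ← ENNReal.ofReal_le_ofReal_iff (by positivity), hnet F hF]
  -- Replacing `π x` by `x` costs at most `2 δ L` in each of the `m` directions.
  have hpt : ∀ x ∈ Q, F (π x) ≤ ∑ i, |g (x + Pi.single i 1) - g x| + ε * L := by
    intro x hx
    refine le_trans ?_ (add_le_add_right hδm _)
    have hm : (m : ℝ) * (2 * (δ * L)) = ∑ _i : Fin m, 2 * (δ * L) := by simp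
    rw [hm, ← Finset.sum_add_distrib]
    refine Finset.sum_le_sum fun i _ => ?_
    have e1 : dist (g (π x)) (g x) ≤ δ * L :=
      (hgdist _ _).trans (mul_le_mul_of_nonneg_right (hπ x hx) hL.le)
    have e2 : dist (g (x + Pi.single i 1)) (g (π x + Pi.single i 1)) ≤ δ * L := by
      refine (hgdist _ _).trans (mul_le_mul_of_nonneg_right ?_ hL.le)
      rw [dist_add_right, dist_comm]
      exact hπ x hx
    have e3 := dist_triangle4 (g (π x)) (g x) (g (x + Pi.single i 1)) (g (π x + Pi.single i 1))
    have e4 : f (φ (π x) + u i) = g (π x + Pi.single i 1) := by simp only [g, hφadd]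
    rw [e4, ← Real.dist_eq, dist_comm (g (x + Pi.single i 1)) (g x)]
    change dist (g (π x)) _ ≤ _
    linarith
  have hgm : ∀ i : Fin m, Measurable fun x => ‖g (x + Pi.single i 1) - g x‖ₑ := by
    intro i
    have := hgL.continuous
    exact Continuous.measurable (by fun_prop)
  calc ∫⁻ x in Q, ENNReal.ofReal (F (π x))
      ≤ ∫⁻ x in Q, (∑ i, ‖g (x + Pi.single i 1) - g x‖ₑ + ENNReal.ofReal (ε * L)) := by
        refine setLIntegral_mono' Metric.isClosed_closedBall.measurableSet fun x hx => ?_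
        refine (ENNReal.ofReal_le_ofReal (hpt x hx)).trans ?_
        rw [ENNReal.ofReal_add (by positivity) (by positivity),
          ENNReal.ofReal_sum_of_nonneg fun _ _ => abs_nonneg _]
        simp only [← Real.norm_eq_abs, ofReal_norm]
        rfl
    _ = ∑ i, (∫⁻ x in Q, ‖g (x + Pi.single i 1) - g x‖ₑ) + ENNReal.ofReal (ε * L) * volume Q := by
        rw [lintegral_add_right _ measurable_const, lintegral_finsetSum _ fun i _ => hgm i,
          setLIntegral_const]
    _ ≤ ENNReal.ofReal (ε * L) * (2 * volume Q) + ENNReal.ofReal (ε * L) * volume Q := by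
        gcongr
        exact hcube.trans (by gcongr)
    _ = ENNReal.ofReal (3 * ε * ∑ y ∈ π.range, w y * L) := by
        rw [ENNReal.ofReal_mul (p := 3 * ε) (by positivity), hDint, ENNReal.ofReal_mul hε.le,
          ENNReal.ofReal_mul (by norm_num), show ENNReal.ofReal 3 = 3 by simp]
        ring

/-! ### The Dvoretzky–Rogers lemma -/

/-- An operator `T` of norm at most one from Euclidean space that maximises the volume of the image
of the unit ball: composing `T` with `D` cannot increase volume without increasing the norm. -/
lemma exists_max_det {X : Type*} [NormedAddCommGroup X] [NormedSpace ℝ X] {n : ℕ}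
    (A : EuclideanSpace ℝ (Fin n) →L[ℝ] X) (hA : Function.Injective A) :
    ∃ T : EuclideanSpace ℝ (Fin n) →L[ℝ] X, ‖T‖ ≤ 1 ∧
      ∀ (D : EuclideanSpace ℝ (Fin n) →L[ℝ] EuclideanSpace ℝ (Fin n)) (r : ℝ), 0 < r →
        ‖T.comp D‖ ≤ r → |D.det| ≤ r ^ n := by
  let E := EuclideanSpace ℝ (Fin n)
  have hdet_smul : ∀ (c : ℝ) (D : E →L[ℝ] E), (c • D).det = c ^ n * D.det := by
    intro c D
    have h1 : ((c • D : E →L[ℝ] E) : E →ₗ[ℝ] E) = c • (D : E →ₗ[ℝ] E) := rfl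
    simp only [ContinuousLinearMap.det, h1, LinearMap.det_smul, E, finrank_euclideanSpace,
      Fintype.card_fin]
  obtain ⟨K, -, hK⟩ := (A : E →ₗ[ℝ] X).exists_antilipschitzWith (LinearMap.ker_eq_bot.2 hA)
  let S : Set (E →L[ℝ] E) := {M | ‖A.comp M‖ ≤ 1}
  have hcont : Continuous fun M : E →L[ℝ] E => A.comp M := by fun_prop
  have hSclosed : IsClosed S := isClosed_le hcont.norm continuous_const
  have hSsub : S ⊆ Metric.closedBall 0 K := by
    intro M hM
    rw [mem_closedBall_zero_iff]
    refine M.opNorm_le_bound K.coe_nonneg fun x => ?_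
    have h1 : ‖M x‖ ≤ K * ‖A (M x)‖ := by
      have := hK.le_mul_dist (M x) 0
      simpa using this
    have h2 : ‖A (M x)‖ ≤ 1 * ‖x‖ := (A.comp M).le_of_opNorm_le hM x
    rw [one_mul] at h2
    exact h1.trans (mul_le_mul_of_nonneg_left h2 K.coe_nonneg)
  have : ProperSpace (E →L[ℝ] E) := FiniteDimensional.proper ℝ _
  have hScomp : IsCompact S := (isCompact_closedBall _ _).of_isClosed_subset hSclosed hSsub
  have hc : (0 : ℝ) < (‖A‖ + 1)⁻¹ := by positivity
  have hid : (‖A‖ + 1)⁻¹ • ContinuousLinearMap.id ℝ E ∈ S := by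
    change ‖A.comp ((‖A‖ + 1)⁻¹ • ContinuousLinearMap.id ℝ E)‖ ≤ 1
    rw [ContinuousLinearMap.comp_smul, ContinuousLinearMap.comp_id, norm_smul,
      Real.norm_of_nonneg hc.le, inv_mul_le_iff₀ (by positivity)]
    linarith
  obtain ⟨M, hMS, hMmax⟩ := hScomp.exists_isMaxOn ⟨_, hid⟩
    (ContinuousLinearMap.continuous_det.abs.continuousOn)
  have hdet : 0 < |M.det| := by
    refine lt_of_lt_of_le ?_ (hMmax hid)
    simp only [hdet_smul]
    have : (ContinuousLinearMap.id ℝ E).det = 1 := by simp [ContinuousLinearMap.det]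
    rw [this, mul_one]
    positivity
  refine ⟨A.comp M, hMS, fun D r hr hD => ?_⟩
  have hmem : r⁻¹ • M.comp D ∈ S := by
    change ‖A.comp (r⁻¹ • M.comp D)‖ ≤ 1
    rw [ContinuousLinearMap.comp_smul, norm_smul, norm_inv, Real.norm_of_nonneg hr.le,
      inv_mul_le_iff₀ hr, mul_one]
    exact hD
  have h1 : |(r⁻¹ • M.comp D).det| ≤ |M.det| := hMmax hmem
  have h2 : (M.comp D).det = M.det * D.det := by
    simp [ContinuousLinearMap.det, ContinuousLinearMap.toLinearMap_comp, LinearMap.det_comp]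
  rw [hdet_smul, h2, abs_mul, abs_mul, abs_of_pos (by positivity : (0 : ℝ) < r⁻¹ ^ n), inv_pow,
    inv_mul_le_iff₀ (by positivity), mul_comm (r ^ n)] at h1
  exact le_of_mul_le_mul_left h1 hdet

/-- For such a maximal `T`, an orthonormal family of at most `n / 2` vectors can be enlarged by a
vector on which `T` is not small: otherwise stretching the orthogonal complement by a factor `4`
would increase the volume too much. -/
lemma orthonormal_step {X : Type*} [NormedAddCommGroup X] [NormedSpace ℝ X] {n : ℕ} (hn : 0 < n)
    (T : EuclideanSpace ℝ (Fin n) →L[ℝ] X) (hT1 : ‖T‖ ≤ 1)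
    (hT : ∀ (D : EuclideanSpace ℝ (Fin n) →L[ℝ] EuclideanSpace ℝ (Fin n)) (r : ℝ), 0 < r →
        ‖T.comp D‖ ≤ r → |D.det| ≤ r ^ n)
    (b : OrthonormalBasis (Fin n) ℝ (EuclideanSpace ℝ (Fin n))) (s : Finset (Fin n))
    (hs : 2 * s.card ≤ n) (hb : ∀ i ∈ s, 1 / 6 ≤ ‖T (b i)‖) :
    ∃ (b' : OrthonormalBasis (Fin n) ℝ (EuclideanSpace ℝ (Fin n))) (s' : Finset (Fin n)),
      s'.card = s.card + 1 ∧ ∀ i ∈ s', 1 / 6 ≤ ‖T (b' i)‖ := by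
  let E := EuclideanSpace ℝ (Fin n)
  let F : Submodule ℝ E := Submodule.span ℝ (b '' s)
  let P : E →L[ℝ] E := Fᗮ.starProjection
  let D : E →L[ℝ] E := ContinuousLinearMap.id ℝ E + (3 : ℝ) • P
  have hPs : ∀ i ∈ s, P (b i) = 0 := by
    intro i hi
    refine Submodule.starProjection_orthogonal_apply_eq_zero ?_
    exact Submodule.subset_span ⟨i, hi, rfl⟩
  have hPsc : ∀ i ∉ s, P (b i) = b i := by
    intro i hi
    refine Submodule.starProjection_eq_self_iff.2 ?_
    rw [Submodule.mem_orthogonal]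
    intro v hv
    induction hv using Submodule.span_induction with
    | mem v hv =>
      obtain ⟨j, hj, rfl⟩ := hv
      exact b.orthonormal.2 fun hji => hi (hji ▸ hj)
    | zero => simp
    | add v w _ _ h1 h2 => rw [inner_add_left, h1, h2, add_zero]
    | smul c v _ h1 => rw [inner_smul_left, h1, mul_zero]
  have hDb : ∀ i, D (b i) = (if i ∈ s then (1 : ℝ) else 4) • b i := by
    intro i
    by_cases hi : i ∈ s
    · simp [D, hi, hPs i hi]
    · simp only [D, hi, if_false, add_apply, ContinuousLinearMap.id_apply,
        smul_apply, hPsc i hi]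
      module
  have hdet : D.det = 4 ^ (n - s.card) := by
    have hmat : LinearMap.toMatrix b.toBasis b.toBasis (D : E →ₗ[ℝ] E) =
        Matrix.diagonal fun i => if i ∈ s then (1 : ℝ) else 4 := by
      ext i j
      have hDj : (D : E →ₗ[ℝ] E) (b.toBasis j) =
          (if j ∈ s then (1 : ℝ) else 4) • b.toBasis j := by
        rw [b.coe_toBasis]
        exact hDb j
      rw [LinearMap.toMatrix_apply, hDj, map_smul, Finsupp.smul_apply, Module.Basis.repr_self,
        Finsupp.single_apply, Matrix.diagonal_apply]
      by_cases hij : i = j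
      · subst hij; simp
      · simp [hij, Ne.symm hij]
    rw [ContinuousLinearMap.det, ← LinearMap.det_toMatrix b.toBasis, hmat, Matrix.det_diagonal,
      Finset.prod_ite]
    simp [Finset.filter_not, Finset.card_sdiff]
  have hnorm : ¬ ‖T.comp D‖ ≤ 3 / 2 := by
    intro hle
    have h1 := hT D (3 / 2) (by norm_num) hle
    rw [hdet, abs_of_pos (by positivity)] at h1
    have h2 : (2 : ℝ) ^ n ≤ 4 ^ (n - s.card) := by
      rw [show (4 : ℝ) = 2 ^ 2 by norm_num, ← pow_mul]
      exact pow_le_pow_right₀ (by norm_num) (by omega)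
    have h3 : (3 / 2 : ℝ) ^ n < 2 ^ n := pow_lt_pow_left₀ (by norm_num) (by norm_num) hn.ne'
    linarith
  obtain ⟨x, hx⟩ : ∃ x, 3 / 2 * ‖x‖ < ‖T (D x)‖ := by
    by_contra! hcon
    exact hnorm ((T.comp D).opNorm_le_bound (by norm_num) hcon)
  set y := P x with hy
  have hyx : ‖y‖ ≤ ‖x‖ := Submodule.norm_starProjection_apply_le _ x
  have hTx : ‖T x‖ ≤ ‖x‖ := by simpa using T.le_of_opNorm_le hT1 x
  have hTy : 1 / 6 * ‖x‖ < ‖T y‖ := by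
    have h1 : T (D x) = T x + (3 : ℝ) • T y := by simp [D, hy]
    rw [h1] at hx
    have h2 := norm_add_le (T x) ((3 : ℝ) • T y)
    rw [norm_smul, Real.norm_of_nonneg (by norm_num : (0 : ℝ) ≤ 3)] at h2
    linarith
  have hy0 : 0 < ‖y‖ := by
    rw [norm_pos_iff]
    intro h0
    rw [h0, map_zero, norm_zero] at hTy
    linarith [norm_nonneg x]
  have hyF : y ∈ Fᗮ := Submodule.starProjection_apply_mem _ x
  obtain ⟨a, ha⟩ : ∃ a, a ∉ s := by
    by_contra! hcon
    have : s = Finset.univ := Finset.eq_univ_iff_forall.2 hcon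
    rw [this, Finset.card_univ, Fintype.card_fin] at hs
    omega
  let v : Fin n → E := Function.update b a (‖y‖⁻¹ • y)
  have hva : v a = ‖y‖⁻¹ • y := Function.update_self ..
  have hvs : ∀ i ∈ s, v i = b i := by
    intro i hi
    have hia : i ≠ a := by rintro rfl; exact ha hi
    exact Function.update_of_ne hia ..
  have horth : ∀ i ∈ s, inner ℝ (b i) y = 0 := fun i hi =>
    (Submodule.mem_orthogonal F y).1 hyF _ (Submodule.subset_span ⟨i, hi, rfl⟩)
  have hv : Orthonormal ℝ ((↑(insert a s) : Set (Fin n)).domRestrict v) := by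
    constructor
    · rintro ⟨i, hi⟩
      simp only [Set.domRestrict_apply]
      rcases Finset.mem_insert.1 (Finset.mem_coe.1 hi) with rfl | hi
      · rw [hva, norm_smul, norm_inv, norm_norm, inv_mul_cancel₀ hy0.ne']
      · rw [hvs i hi, b.norm_eq_one]
    · rintro ⟨i, hi⟩ ⟨j, hj⟩ hij
      have hij' : i ≠ j := fun h => hij (Subtype.ext h)
      simp only [Set.domRestrict_apply]
      rcases Finset.mem_insert.1 (Finset.mem_coe.1 hi) with hia | hi <;>
        rcases Finset.mem_insert.1 (Finset.mem_coe.1 hj) with hja | hj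
      · exact absurd (hia.trans hja.symm) hij'
      · rw [hia, hva, hvs j hj, real_inner_comm, inner_smul_right, horth j hj, mul_zero]
      · rw [hja, hva, hvs i hi, inner_smul_right, horth i hi, mul_zero]
      · rw [hvs i hi, hvs j hj]
        exact b.orthonormal.2 hij'
  obtain ⟨b', hb'⟩ := hv.exists_orthonormalBasis_extension_of_card_eq
    (finrank_euclideanSpace (𝕜 := ℝ) (ι := Fin n))
  refine ⟨b', insert a s, Finset.card_insert_of_notMem ha, fun i hi => ?_⟩
  rw [hb' i (Finset.mem_coe.2 hi)]
  rcases Finset.mem_insert.1 hi with rfl | hi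
  · rw [hva, map_smul, norm_smul, norm_inv, norm_norm, inv_mul_eq_div, le_div_iff₀ hy0]
    linarith
  · rw [hvs i hi]
    exact hb i hi

/-- In an infinite-dimensional space there are vectors all of whose signed sums are short compared
with the sum of their norms. -/
lemma exists_vectors {X : Type*} [NormedAddCommGroup X] [NormedSpace ℝ X]
    (hX : ¬ FiniteDimensional ℝ X) (ε : ℝ) (hε : 0 < ε) :
    ∃ (m : ℕ) (u : Fin m → X), 0 < ∑ i, ‖u i‖ ∧
      ∀ s : Fin m → ℝ, (∀ i, |s i| ≤ 1) → ‖∑ i, s i • u i‖ ≤ ε * ∑ i, ‖u i‖ := by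
  obtain ⟨k, hk⟩ := exists_nat_gt (36 / ε ^ 2)
  have hk0 : (0 : ℝ) < k := lt_of_le_of_lt (by positivity) hk
  have hk0' : 0 < k := by exact_mod_cast hk0
  obtain ⟨e, he⟩ : ∃ e : Fin (2 * k) → X, LinearIndependent ℝ e := by
    refine exists_linearIndependent_of_le_rank ?_
    refine (Cardinal.natCast_le_aleph0).trans ?_
    by_contra! hlt
    exact hX (Module.rank_lt_aleph0_iff.1 hlt)
  let A₀ : EuclideanSpace ℝ (Fin (2 * k)) →ₗ[ℝ] X :=
    (EuclideanSpace.basisFun (Fin (2 * k)) ℝ).toBasis.constr ℝ e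
  have hA₀ : Function.Injective A₀ := by
    rw [← LinearMap.ker_eq_bot]
    refine LinearMap.ker_eq_bot'.2 fun x hx => ?_
    rw [Module.Basis.constr_apply_fintype] at hx
    have h0 := Fintype.linearIndependent_iff.1 he _ hx
    exact (EuclideanSpace.basisFun (Fin (2 * k)) ℝ).toBasis.ext_elem fun i => by simpa using h0 i
  obtain ⟨T, hT1, hT⟩ := exists_max_det A₀.toContinuousLinearMap hA₀
  have hex : ∀ j ≤ k, ∃ (b : OrthonormalBasis (Fin (2 * k)) ℝ (EuclideanSpace ℝ (Fin (2 * k))))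
      (s : Finset (Fin (2 * k))), s.card = j ∧ ∀ i ∈ s, 1 / 6 ≤ ‖T (b i)‖ := by
    intro j
    induction j with
    | zero => exact fun _ => ⟨EuclideanSpace.basisFun _ ℝ, ∅, by simp⟩
    | succ j ih =>
      intro hj
      obtain ⟨b, s, hs, hb⟩ := ih (by omega)
      obtain ⟨b', s', hs', hb'⟩ := orthonormal_step (by omega) T hT1 hT b s (by omega) hb
      exact ⟨b', s', by omega, hb'⟩
  obtain ⟨b, s, hs, hb⟩ := hex k le_rfl
  let u : Fin (2 * k) → X := fun i => if i ∈ s then T (b i) else 0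
  have hsum : (k : ℝ) / 6 ≤ ∑ i, ‖u i‖ := by
    have h1 : ∑ i, ‖u i‖ = ∑ i ∈ s, ‖T (b i)‖ := by
      simp only [u, apply_ite norm, norm_zero]
      rw [Finset.sum_ite_mem, Finset.univ_inter]
    rw [h1]
    have := Finset.card_nsmul_le_sum s (fun i => ‖T (b i)‖) (1 / 6) hb
    rw [hs, nsmul_eq_mul] at this
    linarith
  refine ⟨2 * k, u, lt_of_lt_of_le (by positivity) hsum, fun c hc => ?_⟩
  let d : Fin (2 * k) → ℝ := fun i => if i ∈ s then c i else 0
  have h1 : ∑ i, c i • u i = T (∑ i, d i • b i) := by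
    rw [map_sum]
    refine Finset.sum_congr rfl fun i _ => ?_
    by_cases hi : i ∈ s <;> simp [u, d, hi]
  have h2 : ‖∑ i, d i • b i‖ ^ 2 ≤ k := by
    rw [← real_inner_self_eq_norm_sq, b.orthonormal.inner_sum]
    have h3 : ∀ i, (starRingEnd ℝ) (d i) * d i ≤ if i ∈ s then 1 else 0 := by
      intro i
      by_cases hi : i ∈ s
      · have := abs_le.1 (hc i)
        simp only [d, hi, if_true, conj_trivial]
        nlinarith
      · simp [d, hi]
    refine (Finset.sum_le_sum fun i _ => h3 i).trans ?_
    simp [hs]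
  have h4 : ‖∑ i, d i • b i‖ ≤ ε * (k / 6) := by
    refine abs_le_of_sq_le_sq' ?_ (by positivity) |>.2
    refine h2.trans ?_
    rw [div_lt_iff₀ (by positivity)] at hk
    nlinarith
  rw [h1]
  calc ‖T (∑ i, d i • b i)‖ ≤ ‖∑ i, d i • b i‖ := (T.le_of_opNorm_le hT1 _).trans_eq (one_mul _)
    _ ≤ ε * (k / 6) := h4
    _ ≤ ε * ∑ i, ‖u i‖ := by gcongr

end LipVar

/-- If `X` is an infinite-dimensional Banach space, then for every `ε > 0` there is
`γ : [0,1] → X` with `Var γ = 1` and `LVar γ ≤ ε`; in particular `LCJ X = 0`. -/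
theorem lcj_infinite_dimensional (X : Type*) [NormedAddCommGroup X] [NormedSpace ℝ X]
    [CompleteSpace X] (hX : ¬ FiniteDimensional ℝ X) :
    (∀ ε : ℝ, 0 < ε → ∃ γ : ℝ → X, Var 0 1 γ = 1 ∧ LVar 0 1 γ ≤ ENNReal.ofReal ε) ∧
    LCJ X = 0 := by
  have main : ∀ ε : ℝ, 0 < ε →
      ∃ γ : ℝ → X, Var 0 1 γ = 1 ∧ LVar 0 1 γ ≤ ENNReal.ofReal ε := by
    intro ε hε
    obtain ⟨m, u, hL, hu⟩ := LipVar.exists_vectors hX (ε / 6) (by positivity)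
    obtain ⟨γ, h1, h2⟩ := LipVar.exists_curve_of_vectors u (ε / 6) (by positivity) hL hu
    refine ⟨γ, h1, h2.trans_eq ?_⟩
    congr 1
    ring
  refine ⟨main, le_antisymm (_root_.le_of_forall_pos_le_add fun δ hδ => ?_) zero_le⟩
  obtain ⟨ε, hε, hεδ⟩ : ∃ ε : ℝ, 0 < ε ∧ ENNReal.ofReal ε ≤ δ := by
    obtain ⟨r, hr0, hr⟩ := ENNReal.lt_iff_exists_nnreal_btwn.1 hδ
    refine ⟨r, by exact_mod_cast hr0, ?_⟩
    rw [ENNReal.ofReal_coe_nnreal]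
    exact hr.le
  obtain ⟨γ, h1, h2⟩ := main ε hε
  have h3 : LCJ X ≤ LVar 0 1 γ / Var 0 1 γ :=
    iInf_le_of_le 0 <| iInf_le_of_le 1 <| iInf_le_of_le zero_lt_one <| iInf_le_of_le γ <|
      iInf_le_of_le (by rw [h1]; exact one_pos) <| iInf_le _ (by rw [h1]; exact ENNReal.one_lt_top)
  rw [h1, div_one] at h3
  rw [zero_add]
  exact h3.trans (h2.trans hεδ)
end

section
/- Let (M, ρ) be a uniformly disconnected metric space, i.e., there is a constant c₀ ∈ (0,1) such that for each x ∈ M and r > 0 there exists a closed set A with B_{c₀ r}(x) ⊆ A ⊆ B_r(x) and dist(A, M ∖ A) ≥ c₀ r. Then there exists a constant c > 0 (depending only on c₀) such that for every a < b and every map γ : [a,b] → M, c · Var_γ ≤ LVar_γ. In particular LCJ(M) > 0, and on M Lipschitz functions catch jumps: if LVar_γ < ∞ then Var_γ < ∞. -/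
/-!
Fix `c₀` and call two points equivalent at scale `r` if they are joined by a chain with steps
shorter than `c₀ * r`. Inequivalent points are at distance at least `c₀ * r`, while uniform
disconnectedness keeps every class inside a ball: a set `A` with `dist(A, M \ A) ≥ c₀ * r` is a
union of classes, so equivalent points are at distance at most `r` (`dist_le_of_chainSetoid`).

Given finitely many pairs `(xᵢ, yᵢ)` (the consecutive values of `γ` along a partition), take
dyadic scales `R * 2 ^ k` and the function `f = ∑ₖ (c₀ / 4) * R * 2 ^ k * εₖ([x]ₖ)`, where `[x]ₖ`
is the class of `x` at scale `k` and `εₖ` takes values in `[-1, 1]`. If `k` is the coarsest scale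
separating `x` and `y`, only the terms up to `k` contribute to `f x - f y`; they add up to at most
`c₀ * R * 2 ^ k ≤ dist x y`, so `f` is 1-Lipschitz for any choice of signs.

The signs are chosen from fine to coarse. Since `|u + δ| + |u - δ| ≥ 2 * δ`, signs at scale `k` can
be found such that the pairs whose coarsest separating scale is `k` contribute on average at least
`(c₀ / 4) * R * 2 ^ k` (`exists_signs`), which is at least `c₀ / 8` times their distance. Coarser
terms do not affect these pairs. Summation over the scales gives the constant `c = c₀ / 8`
(`exists_lipschitz_sum`).
-/

open Set ENNReal

/-- Greedy choice of signs, one label at a time: for pairs `(p i, q i)` of distinct labels and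
arbitrary offsets `u i`, the signs can be chosen so that the differences `δ * (ε (p i) - ε (q i))`
do not cancel the offsets on average. -/
lemma exists_signs {ι κ : Type*} (J : Finset κ) (p q : κ → ι) (u : κ → ℝ) (δ : ℝ)
    (hpq : ∀ i ∈ J, p i ≠ q i) :
    ∃ ε : ι → ℝ, (∀ t, |ε t| ≤ 1) ∧
      ∑ _i ∈ J, δ ≤ ∑ i ∈ J, |u i + δ * (ε (p i) - ε (q i))| := by
  classical
  have key : ∀ T : Finset ι, ∃ ε : ι → ℝ, (∀ t, |ε t| ≤ 1) ∧
      ∑ _i ∈ J with p _i ∈ T ∧ q _i ∈ T, δ ≤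
        ∑ i ∈ J with p i ∈ T ∧ q i ∈ T, |u i + δ * (ε (p i) - ε (q i))| := by
    intro T
    induction T using Finset.induction_on with
    | empty => exact ⟨fun _ => 0, by simp, by simp⟩
    | insert t T ht ih =>
      obtain ⟨ε, hε, hsum⟩ := ih
      set N := J.filter (fun i => (p i ∈ insert t T ∧ q i ∈ insert t T) ∧ ¬ (p i ∈ T ∧ q i ∈ T))
        with hN
      have hsplit : ∀ g : κ → ℝ, ∑ i ∈ J with p i ∈ insert t T ∧ q i ∈ insert t T, g i
          = (∑ i ∈ J with p i ∈ T ∧ q i ∈ T, g i) + ∑ i ∈ N, g i := by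
        intro g
        rw [← Finset.sum_filter_add_sum_filter_not
          (J.filter (fun i => p i ∈ insert t T ∧ q i ∈ insert t T)) (fun i => p i ∈ T ∧ q i ∈ T)]
        congr 1
        · apply Finset.sum_congr _ (fun _ _ => rfl)
          ext i
          simp only [Finset.mem_filter, Finset.mem_insert]
          tauto
        · rw [Finset.filter_filter]
      have hold : ∀ s : ℝ, ∑ i ∈ J with p i ∈ T ∧ q i ∈ T,
            |u i + δ * (Function.update ε t s (p i) - Function.update ε t s (q i))|
          = ∑ i ∈ J with p i ∈ T ∧ q i ∈ T, |u i + δ * (ε (p i) - ε (q i))| := by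
        intro s
        apply Finset.sum_congr rfl
        intro i hi
        obtain ⟨_, h1, h2⟩ := Finset.mem_filter.1 hi
        have hp : p i ≠ t := fun h => ht (h ▸ h1)
        have hq : q i ≠ t := fun h => ht (h ▸ h2)
        rw [Function.update_of_ne hp, Function.update_of_ne hq]
      have hbound : ∀ s : ℝ, |s| ≤ 1 → ∀ x, |Function.update ε t s x| ≤ 1 := by
        intro s hs x
        by_cases hx : x = t
        · subst hx; simpa using hs
        · rw [Function.update_of_ne hx]; exact hε x
      -- Averaging over the two values `1` and `-1` of the new sign.
      have hnew : ∑ _i ∈ N, (2 * δ) ≤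
          ∑ i ∈ N, (|u i + δ * (Function.update ε t 1 (p i) - Function.update ε t 1 (q i))|
            + |u i + δ * (Function.update ε t (-1) (p i) - Function.update ε t (-1) (q i))|) := by
        apply Finset.sum_le_sum
        intro i hi
        obtain ⟨hiJ, ⟨h1, h2⟩, h3⟩ := Finset.mem_filter.1 hi
        have hne := hpq i hiJ
        rw [Finset.mem_insert] at h1 h2
        by_cases hp : p i = t
        · have hq : q i ≠ t := fun h => hne (hp.trans h.symm)
          rw [hp, Function.update_self, Function.update_self, Function.update_of_ne hq,
            Function.update_of_ne hq]
          have e1 := le_abs_self (u i + δ * (1 - ε (q i)))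
          have e2 := neg_abs_le (u i + δ * (-1 - ε (q i)))
          linarith
        · have hq : q i = t := by tauto
          rw [hq, Function.update_self, Function.update_self, Function.update_of_ne hp,
            Function.update_of_ne hp]
          have e1 := neg_abs_le (u i + δ * (ε (p i) - 1))
          have e2 := le_abs_self (u i + δ * (ε (p i) - -1))
          linarith
      rw [Finset.sum_add_distrib, ← Finset.mul_sum] at hnew
      rcases le_total (∑ _i ∈ N, δ)
        (∑ i ∈ N, |u i + δ * (Function.update ε t 1 (p i) - Function.update ε t 1 (q i))|)
        with h | h
      · refine ⟨Function.update ε t 1, hbound 1 (by simp), ?_⟩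
        rw [hsplit, hsplit, hold]
        linarith
      · refine ⟨Function.update ε t (-1), hbound (-1) (by simp), ?_⟩
        rw [hsplit, hsplit, hold]
        linarith
  obtain ⟨ε, hε, h⟩ := key (J.image p ∪ J.image q)
  refine ⟨ε, hε, ?_⟩
  rwa [Finset.filter_true_of_mem] at h
  intro i hi
  exact ⟨Finset.mem_union_left _ (Finset.mem_image_of_mem p hi),
    Finset.mem_union_right _ (Finset.mem_image_of_mem q hi)⟩

/-- Points are equivalent at scale `t` if they are joined by a chain with steps shorter than `t`. -/
def chainSetoid (M : Type*) [MetricSpace M] (t : ℝ) : Setoid M :=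
  Relation.EqvGen.setoid (fun x y => dist x y < t)

lemma chainSetoid_of_dist_lt {M : Type*} [MetricSpace M] {t : ℝ} {x y : M} (h : dist x y < t) :
    chainSetoid M t x y :=
  Relation.EqvGen.rel _ _ h

lemma chainSetoid_mono {M : Type*} [MetricSpace M] {s t : ℝ} (hst : s ≤ t) {x y : M}
    (h : chainSetoid M s x y) : chainSetoid M t x y :=
  Relation.EqvGen.mono (fun _ _ hab => lt_of_lt_of_le hab hst) _ _ h

/-- The uniform disconnectedness condition with constant `c₀`. -/
def UnifDisc (M : Type*) [MetricSpace M] (c₀ : ℝ) : Prop :=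
  ∀ (x : M) (r : ℝ), 0 < r → ∃ A : Set M, IsClosed A ∧
    Metric.closedBall x (c₀ * r) ⊆ A ∧ A ⊆ Metric.closedBall x r ∧
    ∀ a ∈ A, ∀ b ∈ Aᶜ, c₀ * r ≤ dist a b

lemma dist_le_of_chainSetoid {M : Type*} [MetricSpace M] {c₀ r : ℝ} (hc : 0 < c₀)
    (hM : UnifDisc M c₀) (hr : 0 < r) {x y : M} (h : chainSetoid M (c₀ * r) x y) :
    dist x y ≤ r := by
  obtain ⟨A, -, hA1, hA2, hA3⟩ := hM x r hr
  have key : ∀ u v, Relation.EqvGen (fun x y : M => dist x y < c₀ * r) u v → (u ∈ A ↔ v ∈ A) := by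
    intro u v huv
    induction huv with
    | rel u v h =>
      constructor
      · intro hu
        by_contra hv
        exact absurd (hA3 u hu v hv) (not_le.2 h)
      · intro hv
        by_contra hu
        exact absurd (hA3 v hv u hu) (not_le.2 (by rwa [dist_comm]))
    | refl u => rfl
    | symm u v _ ih => exact ih.symm
    | trans u v w _ _ ih1 ih2 => exact ih1.trans ih2
  have hx : x ∈ A := hA1 (Metric.mem_closedBall_self (by positivity))
  have hy := hA2 ((key x y h).1 hx)
  rwa [Metric.mem_closedBall, dist_comm] at hy

open Classical in
/-- Induction on the number `n` of dyadic scales used so far: the bound on the oscillation of `f`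
keeps `f` 1-Lipschitz when the next scale is added, and the pairs already equivalent at scale `n`
carry their share of the sum, which the next scales leave untouched. -/
lemma exists_multiscale {M : Type*} [MetricSpace M] {c₀ R : ℝ} (hc : 0 < c₀) (hR : 0 < R)
    (hM : UnifDisc M c₀) {κ : Type*} (J : Finset κ) (x y : κ → M)
    (h0 : ∀ i ∈ J, chainSetoid M (c₀ * R) (x i) (y i) → dist (x i) (y i) = 0) (n : ℕ) :
    ∃ f : M → ℝ, (∀ a b, |f a - f b| ≤ c₀ / 2 * (R * 2 ^ n)) ∧
      (∀ a b, |f a - f b| ≤ dist a b) ∧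
      ∑ i ∈ J with chainSetoid M (c₀ * (R * 2 ^ n)) (x i) (y i), c₀ / 8 * dist (x i) (y i) ≤
        ∑ i ∈ J with chainSetoid M (c₀ * (R * 2 ^ n)) (x i) (y i), |f (x i) - f (y i)| := by
  induction n with
  | zero =>
    refine ⟨fun _ => 0, fun a b => ?_, fun a b => ?_, ?_⟩
    · simp; positivity
    · simp
    · apply Finset.sum_le_sum
      intro i hi
      obtain ⟨hiJ, hi⟩ := Finset.mem_filter.1 hi
      rw [pow_zero, mul_one] at hi
      rw [h0 i hiJ hi]
      simp
  | succ n ih =>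
    obtain ⟨f, hosc, hlip, hsum⟩ := ih
    set r : ℝ := R * 2 ^ n with hr
    have hrpos : 0 < r := by positivity
    have hr' : R * 2 ^ (n + 1) = 2 * r := by rw [hr, pow_succ]; ring
    rw [hr']
    set S := chainSetoid M (c₀ * r) with hS
    set S' := chainSetoid M (c₀ * (2 * r)) with hS'
    have hmono : ∀ a b, S a b → S' a b := fun a b h =>
      chainSetoid_mono (by nlinarith) h
    let cl : M → Quotient S := fun a => Quotient.mk S a
    have hcl : ∀ a b, S a b → cl a = cl b := fun a b h => Quotient.sound h
    have hcl' : ∀ a b, cl a = cl b → S a b := fun a b h => Quotient.exact h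
    -- The pairs whose coarsest separating scale is `r`.
    set K := J.filter (fun i => S' (x i) (y i) ∧ ¬ S (x i) (y i)) with hK
    obtain ⟨ε, hε, hεsum⟩ := exists_signs K (fun i => cl (x i)) (fun i => cl (y i))
      (fun i => f (x i) - f (y i)) (c₀ / 4 * r)
      (fun i hi h => (Finset.mem_filter.1 hi).2.2 (hcl' _ _ h))
    have hdiff : ∀ a b, (f a + c₀ / 4 * r * ε (cl a)) - (f b + c₀ / 4 * r * ε (cl b))
        = (f a - f b) + c₀ / 4 * r * (ε (cl a) - ε (cl b)) := fun a b => by ring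
    have hosc' : ∀ a b, |(f a + c₀ / 4 * r * ε (cl a)) - (f b + c₀ / 4 * r * ε (cl b))|
        ≤ c₀ * r := by
      intro a b
      rw [hdiff]
      have h1 := hosc a b
      have h2 : |ε (cl a) - ε (cl b)| ≤ 2 := by
        have := abs_sub (ε (cl a)) (ε (cl b))
        linarith [hε (cl a), hε (cl b)]
      have h3 : |c₀ / 4 * r * (ε (cl a) - ε (cl b))| ≤ c₀ / 4 * r * 2 := by
        rw [abs_mul, abs_of_pos (by positivity : 0 < c₀ / 4 * r)]
        gcongr
      have h4 := abs_add_le (f a - f b) (c₀ / 4 * r * (ε (cl a) - ε (cl b)))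
      linarith
    have hsame : ∀ a b, S a b → (f a + c₀ / 4 * r * ε (cl a)) - (f b + c₀ / 4 * r * ε (cl b))
        = f a - f b := by
      intro a b h
      rw [hcl a b h]
      ring
    refine ⟨fun a => f a + c₀ / 4 * r * ε (cl a), fun a b => ?_, fun a b => ?_, ?_⟩
    · have := hosc' a b
      linarith
    · by_cases h : S a b
      · simp only [hsame a b h]
        exact hlip a b
      · refine (hosc' a b).trans ?_
        by_contra hlt
        exact h (chainSetoid_of_dist_lt (not_le.1 hlt))
    · have hsplit : ∀ g : κ → ℝ, ∑ i ∈ J with S' (x i) (y i), g i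
          = (∑ i ∈ J with S (x i) (y i), g i) + ∑ i ∈ K, g i := by
        intro g
        rw [← Finset.sum_filter_add_sum_filter_not
          (J.filter (fun i => S' (x i) (y i))) (fun i => S (x i) (y i))]
        congr 1
        · apply Finset.sum_congr _ (fun _ _ => rfl)
          ext i
          simp only [Finset.mem_filter]
          have := hmono (x i) (y i)
          tauto
        · rw [Finset.filter_filter]
      rw [hsplit, hsplit]
      apply add_le_add
      · refine hsum.trans (le_of_eq ?_)
        apply Finset.sum_congr rfl
        intro i hi
        rw [hsame _ _ (Finset.mem_filter.1 hi).2]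
      · simp only [hdiff]
        refine le_trans ?_ hεsum
        apply Finset.sum_le_sum
        intro i hi
        have := dist_le_of_chainSetoid hc hM (by positivity) (Finset.mem_filter.1 hi).2.1
        nlinarith

lemma exists_lipschitz_sum {M : Type*} [MetricSpace M] {c₀ : ℝ} (hc : 0 < c₀)
    (hM : UnifDisc M c₀) {κ : Type*} (J : Finset κ) (x y : κ → M) :
    ∃ f : M → ℝ, LipschitzWith 1 f ∧
      c₀ / 8 * ∑ i ∈ J, dist (x i) (y i) ≤ ∑ i ∈ J, dist (f (x i)) (f (y i)) := by
  classical
  -- The finest scale `R` lies below all positive distances of the given pairs.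
  obtain ⟨R, hR, hRJ⟩ : ∃ R : ℝ, 0 < R ∧ ∀ i ∈ J, dist (x i) (y i) ≤ R → dist (x i) (y i) = 0 := by
    induction J using Finset.induction_on with
    | empty => exact ⟨1, one_pos, by simp⟩
    | insert j J _ ih =>
      obtain ⟨R, hR, h⟩ := ih
      by_cases hj : dist (x j) (y j) = 0
      · exact ⟨R, hR, (Finset.forall_mem_insert ..).2 ⟨fun _ => hj, h⟩⟩
      · have hpos : 0 < dist (x j) (y j) := lt_of_le_of_ne dist_nonneg (Ne.symm hj)
        refine ⟨min R (dist (x j) (y j) / 2), by positivity, ?_⟩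
        intro i hi hle
        rcases Finset.mem_insert.1 hi with rfl | hi
        · have := hle.trans (min_le_right _ _)
          linarith
        · exact h i hi (hle.trans (min_le_left _ _))
  -- At the coarsest scale all pairs are equivalent.
  obtain ⟨n, hn⟩ : ∃ n : ℕ, (∑ i ∈ J, dist (x i) (y i)) / (c₀ * R) < 2 ^ n :=
    pow_unbounded_of_one_lt _ (by norm_num)
  rw [div_lt_iff₀ (by positivity)] at hn
  obtain ⟨f, -, hlip, hsum⟩ := exists_multiscale hc hR hM J x y
    (fun i hi h => hRJ i hi (dist_le_of_chainSetoid hc hM hR h)) n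
  refine ⟨f, LipschitzWith.of_dist_le_mul fun a b => ?_, ?_⟩
  · simpa [Real.dist_eq] using hlip a b
  · rw [Finset.filter_true_of_mem] at hsum
    · rw [Finset.mul_sum]
      exact hsum
    · intro i hi
      apply chainSetoid_of_dist_lt
      have := Finset.single_le_sum (f := fun i => dist (x i) (y i)) (fun _ _ => dist_nonneg) hi
      linarith

lemma mul_Var_le_LVar {M : Type*} [MetricSpace M] {c₀ : ℝ} (hc : 0 < c₀) (hM : UnifDisc M c₀)
    (a b : ℝ) (γ : ℝ → M) : ENNReal.ofReal (c₀ / 8) * Var a b γ ≤ LVar a b γ := by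
  unfold Var eVariationOn
  rw [ENNReal.mul_iSup]
  refine iSup_le fun p => ?_
  obtain ⟨f, hf, hsum⟩ := exists_lipschitz_sum hc hM (Finset.range p.1)
    (fun i => γ (p.2.1 (i + 1))) (fun i => γ (p.2.1 i))
  calc ENNReal.ofReal (c₀ / 8) *
        ∑ i ∈ Finset.range p.1, edist (γ (p.2.1 (i + 1))) (γ (p.2.1 i))
      ≤ ∑ i ∈ Finset.range p.1, edist ((f ∘ γ) (p.2.1 (i + 1))) ((f ∘ γ) (p.2.1 i)) := by
        simp only [edist_dist, Function.comp]
        rw [← ENNReal.ofReal_sum_of_nonneg (fun _ _ => dist_nonneg),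
          ← ENNReal.ofReal_sum_of_nonneg (fun _ _ => dist_nonneg),
          ← ENNReal.ofReal_mul (by positivity)]
        exact ENNReal.ofReal_le_ofReal hsum
    _ ≤ Var a b (f ∘ γ) := eVariationOn.sum_le (n := p.1) p.2.2.1 (fun i => p.2.2.2 i)
    _ ≤ LVar a b γ :=
        le_iSup (fun g : {g : M → ℝ // LipschitzWith 1 g} => Var a b (g.1 ∘ γ)) ⟨f, hf⟩

/-- On a uniformly disconnected metric space, Lipschitz functions catch jumps:
there is `c > 0`, depending only on the constant `c₀` of uniform disconnectedness,
such that `c ⬝ Var γ ≤ LVar γ` for every `γ : [a,b] → M`; in particular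
`LCJ M > 0`, and `LVar γ < ∞` implies `Var γ < ∞`. -/
theorem uniformly_disconnected_catches_jumps :
    ∀ c₀ : ℝ, c₀ ∈ Set.Ioo (0 : ℝ) 1 → ∃ c : ℝ, 0 < c ∧
    ∀ (M : Type) [MetricSpace M],
      (∀ (x : M) (r : ℝ), 0 < r → ∃ A : Set M, IsClosed A ∧
          Metric.closedBall x (c₀ * r) ⊆ A ∧ A ⊆ Metric.closedBall x r ∧
          ∀ a ∈ A, ∀ b ∈ Aᶜ, c₀ * r ≤ dist a b) →
      (∀ (a b : ℝ), a < b → ∀ γ : ℝ → M,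
          ENNReal.ofReal c * Var a b γ ≤ LVar a b γ) ∧
      0 < LCJ M ∧
      (∀ (a b : ℝ), a < b → ∀ γ : ℝ → M, LVar a b γ < ⊤ → Var a b γ < ⊤) := by
  intro c₀ hc₀
  refine ⟨c₀ / 8, by linarith [hc₀.1], ?_⟩
  intro M _ hM
  have hmain := fun a b γ => mul_Var_le_LVar (M := M) hc₀.1 hM a b γ
  have hpos : 0 < ENNReal.ofReal (c₀ / 8) := ENNReal.ofReal_pos.2 (by linarith [hc₀.1])
  refine ⟨fun a b _ γ => hmain a b γ, ?_, ?_⟩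
  · refine lt_of_lt_of_le hpos ?_
    refine le_iInf fun a => le_iInf fun b => le_iInf fun _ => le_iInf fun γ =>
      le_iInf fun h1 => le_iInf fun h2 => ?_
    rw [ENNReal.le_div_iff_mul_le (Or.inl h1.ne') (Or.inl h2.ne)]
    exact hmain a b γ
  · intro a b _ γ h
    by_contra hV
    have h1 := hmain a b γ
    rw [not_lt_top_iff.1 hV, ENNReal.mul_top hpos.ne'] at h1
    exact absurd h (not_lt.2 h1)
end

section
/- There exists a universal constant c > 0 such that for every separable metric space (M, ρ) whose metric is an ultrametric (ρ(x,z) ≤ max(ρ(x,y), ρ(y,z)) for all x, y, z ∈ M), every a < b, and every map γ : [a,b] → M, one has c · Var_γ ≤ LVar_γ. In particular, for every such space, if LVar_γ < ∞ then Var_γ < ∞. -/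
/-!
Only finitely many points `v 0, …, v N` of the curve matter for a given partition. In an ultrametric
space the relation `dist x y < 2 ^ k` is an equivalence relation for every integer `k`, and
`ballLabel v k x` names the class of `x`. Fix a finite set `K` of scales and colour each class
at each scale by a bit; the bits equal to `1` form a set `T`. The function
`bitSum v K T x = ∑ k ∈ K, 2 ^ k * (bit of the class of x at scale k)` is `2`-Lipschitz, because
only scales with `2 ^ k ≤ dist x y` separate `x` from `y` (`abs_bitSum_sub_le`).

If `2 ^ k ≤ dist x y < 2 ^ (k + 1)` with `k ∈ K`, then toggling the single bit of the class of `x`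
at scale `k` moves `bitSum x - bitSum y` by `2 ^ k`. So the average of `|bitSum x - bitSum y|` over
all colourings is at least `2 ^ k / 2 ≥ dist x y / 4` (`average_bitSum`). Summing over consecutive
points, some colouring achieves at least a quarter of the variation along the partition; halving
it to make it `1`-Lipschitz yields the constant `c = 1 / 8`.
-/

open Set ENNReal

/-- A label of the class of `x` under `dist x y < 2 ^ k`: the least index `i` with `v i` in
that class. Classes containing no `v i` all get the junk label `sInf ∅ = 0`. -/
noncomputable def ballLabel {M : Type*} [MetricSpace M] (v : ℕ → M) (k : ℤ) (x : M) : ℕ :=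
  sInf {i : ℕ | dist x (v i) < (2 : ℝ) ^ k}

/-- The sum of `2 ^ k` over the scales `k ∈ K` at which the class of `x` is coloured `1`;
a pair `(k, l)` in `T` means that the class labelled `l` at scale `k` is coloured `1`. -/
noncomputable def bitSum {M : Type*} [MetricSpace M] (v : ℕ → M) (K : Finset ℤ)
    (T : Finset (ℤ × ℕ)) (x : M) : ℝ :=
  ∑ k ∈ K, if (k, ballLabel v k x) ∈ T then (2 : ℝ) ^ k else 0

theorem sum_zpow_le (K : Finset ℤ) : ∀ m : ℤ, (∀ k ∈ K, k ≤ m) →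
    ∑ k ∈ K, (2 : ℝ) ^ k ≤ 2 ^ (m + 1) := by
  induction K using Finset.induction_on_max with
  | empty => intro m _; simp; positivity
  | insert a s hs ih =>
    intro m hm
    have ha : a ∉ s := fun h => lt_irrefl _ (hs a h)
    have h1 := ih (a - 1) (fun k hk => by have := hs k hk; omega)
    rw [Finset.sum_insert ha]
    have h2 : (2 : ℝ) ^ (a + 1) ≤ 2 ^ (m + 1) :=
      zpow_le_zpow_right₀ (by norm_num) (by have := hm a (Finset.mem_insert_self _ _); omega)
    rw [zpow_add_one₀ (by norm_num)] at h2
    rw [sub_add_cancel] at h1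
    linarith

theorem ballLabel_eq {M : Type*} [MetricSpace M]
    (hu : ∀ x y z : M, dist x z ≤ max (dist x y) (dist y z)) (v : ℕ → M) (k : ℤ) {x y : M}
    (h : dist x y < 2 ^ k) : ballLabel v k x = ballLabel v k y := by
  unfold ballLabel
  congr 1
  ext i
  constructor
  · intro hi
    exact (hu y x (v i)).trans_lt (max_lt (by rwa [dist_comm]) hi)
  · intro hi
    exact (hu x y (v i)).trans_lt (max_lt h hi)

theorem ballLabel_spec {M : Type*} [MetricSpace M] (v : ℕ → M) (k : ℤ) (i : ℕ) :
    dist (v i) (v (ballLabel v k (v i))) < 2 ^ k ∧ ballLabel v k (v i) ≤ i := by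
  have hi : i ∈ {j : ℕ | dist (v i) (v j) < (2 : ℝ) ^ k} := by
    simp only [Set.mem_ofPred_eq, dist_self]; positivity
  exact ⟨Nat.sInf_mem ⟨i, hi⟩, Nat.sInf_le hi⟩

theorem ballLabel_ne {M : Type*} [MetricSpace M]
    (hu : ∀ x y z : M, dist x z ≤ max (dist x y) (dist y z)) (v : ℕ → M) (k : ℤ) {i j : ℕ}
    (h : 2 ^ k ≤ dist (v i) (v j)) : ballLabel v k (v i) ≠ ballLabel v k (v j) := by
  intro he
  have h1 := (ballLabel_spec v k i).1
  have h2 := (ballLabel_spec v k j).1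
  rw [he] at h1
  rw [dist_comm] at h2
  exact absurd (hu (v i) _ (v j)) (not_le.2 ((max_lt h1 h2).trans_le h))

theorem abs_bitSum_sub_le {M : Type*} [MetricSpace M]
    (hu : ∀ x y z : M, dist x z ≤ max (dist x y) (dist y z)) (v : ℕ → M) (K : Finset ℤ)
    (T : Finset (ℤ × ℕ)) (x y : M) :
    |bitSum v K T x - bitSum v K T y| ≤ 2 * dist x y := by
  rcases eq_or_ne x y with rfl | hxy
  · simp
  have hd : 0 < dist x y := dist_pos.2 hxy
  have hlog := Int.zpow_log_le_self (b := 2) one_lt_two hd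
  have hlt := Int.lt_zpow_succ_log_self (b := 2) one_lt_two (dist x y)
  push_cast at hlog hlt
  set m := Int.log 2 (dist x y)
  unfold bitSum
  rw [← Finset.sum_sub_distrib]
  calc _ ≤ ∑ k ∈ K, |(if (k, ballLabel v k x) ∈ T then (2 : ℝ) ^ k else 0)
          - (if (k, ballLabel v k y) ∈ T then (2 : ℝ) ^ k else 0)| :=
        Finset.abs_sum_le_sum_abs _ _
    _ ≤ ∑ k ∈ K, if k ≤ m then (2 : ℝ) ^ k else 0 := by
        refine Finset.sum_le_sum fun k _ => ?_
        have hk : (0 : ℝ) < 2 ^ k := by positivity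
        by_cases hkm : k ≤ m
        · rw [if_pos hkm]
          split_ifs <;> simp [abs_of_pos hk, hk.le]
        · have := ballLabel_eq hu v k (hlt.trans_le
            (zpow_le_zpow_right₀ (by norm_num) (by omega : m + 1 ≤ k)))
          simp [this, hkm]
    _ = ∑ k ∈ K with k ≤ m, (2 : ℝ) ^ k := (Finset.sum_filter _ _).symm
    _ ≤ 2 ^ (m + 1) := sum_zpow_le _ m (by simp)
    _ ≤ 2 * dist x y := by rw [zpow_add_one₀ (by norm_num)]; linarith

/-- Toggling the bit of the class of `x` at scale `k` changes `bitSum x - bitSum y` by `2 ^ k`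
when `y` has a different label at that scale, so the two differences cannot both be small. -/
theorem bitSum_toggle {M : Type*} [MetricSpace M] (v : ℕ → M) (K : Finset ℤ)
    (T : Finset (ℤ × ℕ)) (x y : M) (k : ℤ) (hk : k ∈ K)
    (hne : ballLabel v k x ≠ ballLabel v k y) :
    2 ^ k ≤ |bitSum v K T x - bitSum v K T y|
      + |bitSum v K (symmDiff T {(k, ballLabel v k x)}) x
          - bitSum v K (symmDiff T {(k, ballLabel v k x)}) y| := by
  set T' := symmDiff T {(k, ballLabel v k x)} with hT'
  have hpos : (0 : ℝ) < 2 ^ k := by positivity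
  have hy : bitSum v K T' y = bitSum v K T y := by
    refine Finset.sum_congr rfl fun j _ => ?_
    have : (j, ballLabel v j y) ∈ T' ↔ (j, ballLabel v j y) ∈ T := by
      have hn : (j, ballLabel v j y) ≠ (k, ballLabel v k x) := by
        intro h
        rw [Prod.mk.injEq] at h
        obtain ⟨rfl, h⟩ := h
        exact hne h.symm
      rw [hT', Finset.mem_symmDiff, Finset.mem_singleton]
      tauto
    simp only [this]
  have hx : |bitSum v K T x - bitSum v K T' x| = 2 ^ k := by
    unfold bitSum
    rw [← Finset.sum_sub_distrib, Finset.sum_eq_single_of_mem k hk]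
    · by_cases h : (k, ballLabel v k x) ∈ T <;>
        simp [hT', Finset.mem_symmDiff, h, abs_of_pos hpos]
    · intro j _ hj
      have : (j, ballLabel v j x) ∈ T' ↔ (j, ballLabel v j x) ∈ T := by
        simp [hT', Finset.mem_symmDiff, hj]
      simp only [this, sub_self]
  rw [hy, ← hx]
  calc _ = |(bitSum v K T x - bitSum v K T y) - (bitSum v K T' x - bitSum v K T y)| := by
        congr 1; ring
    _ ≤ _ := abs_sub _ _

/-- The average of `|bitSum (v i) - bitSum (v j)|` over all colourings of the labels `0, …, N` at
the scales in `K` is at least a quarter of the distance, as soon as `K` contains the scale of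
that distance. -/
theorem average_bitSum {M : Type*} [MetricSpace M]
    (hu : ∀ x y z : M, dist x z ≤ max (dist x y) (dist y z)) (v : ℕ → M) (K : Finset ℤ)
    (N i j : ℕ) (hi : i ≤ N) (hK : Int.log 2 (dist (v i) (v j)) ∈ K) :
    ∑ _T ∈ (K ×ˢ Finset.range (N + 1)).powerset, dist (v i) (v j) / 4 ≤
      ∑ T ∈ (K ×ˢ Finset.range (N + 1)).powerset,
        |bitSum v K T (v i) - bitSum v K T (v j)| := by
  rcases eq_or_ne (v i) (v j) with h | hxy
  · simp [h]
  have hd : 0 < dist (v i) (v j) := dist_pos.2 hxy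
  have hlog := Int.zpow_log_le_self (b := 2) one_lt_two hd
  have hlt := Int.lt_zpow_succ_log_self (b := 2) one_lt_two (dist (v i) (v j))
  push_cast at hlog hlt
  set k := Int.log 2 (dist (v i) (v j))
  rw [zpow_add_one₀ (by norm_num)] at hlt
  set P := K ×ˢ Finset.range (N + 1)
  have hp : (k, ballLabel v k (v i)) ∈ P := by
    have := (ballLabel_spec v k i).2
    simp only [P, Finset.mem_product, Finset.mem_range]
    exact ⟨hK, by omega⟩
  set p := (k, ballLabel v k (v i))
  set g : Finset (ℤ × ℕ) → ℝ := fun T => |bitSum v K T (v i) - bitSum v K T (v j)| with hg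
  have hmaps : ∀ T ∈ P.powerset, symmDiff T {p} ∈ P.powerset := by
    intro T hT
    rw [Finset.mem_powerset] at hT ⊢
    intro q hq
    rw [Finset.mem_symmDiff, Finset.mem_singleton] at hq
    rcases hq with h | h
    · exact hT h.1
    · exact h.1 ▸ hp
  have hinv : ∑ T ∈ P.powerset, g (symmDiff T {p}) = ∑ T ∈ P.powerset, g T :=
    Finset.sum_bij' (fun T _ => symmDiff T {p}) (fun T _ => symmDiff T {p}) hmaps hmaps
      (fun T _ => symmDiff_symmDiff_cancel_right _ _)
      (fun T _ => symmDiff_symmDiff_cancel_right _ _) (fun _ _ => rfl)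
  have hsum : ∑ _T ∈ P.powerset, dist (v i) (v j) / 2 ≤
      ∑ T ∈ P.powerset, (g T + g (symmDiff T {p})) := by
    refine Finset.sum_le_sum fun T _ => ?_
    have := bitSum_toggle v K T (v i) (v j) k hK (ballLabel_ne hu v k hlog)
    simp only [hg]
    linarith
  rw [Finset.sum_add_distrib, hinv] at hsum
  simp only [Finset.sum_const, nsmul_eq_mul] at hsum ⊢
  linarith

theorem exists_lipschitz_sum_le {M : Type*} [MetricSpace M]
    (hu : ∀ x y z : M, dist x z ≤ max (dist x y) (dist y z)) (v : ℕ → M) (N : ℕ) :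
    ∃ f : M → ℝ, LipschitzWith 1 f ∧
      (1 / 8) * ∑ i ∈ Finset.range N, dist (v (i + 1)) (v i) ≤
        ∑ i ∈ Finset.range N, dist (f (v (i + 1))) (f (v i)) := by
  set K : Finset ℤ := (Finset.range N).image fun i => Int.log 2 (dist (v (i + 1)) (v i))
  obtain ⟨T, _, hT⟩ := Finset.exists_le_of_sum_le
    (s := (K ×ˢ Finset.range (N + 1)).powerset)
    (f := fun _ => ∑ i ∈ Finset.range N, dist (v (i + 1)) (v i) / 4)
    (g := fun T => ∑ i ∈ Finset.range N, |bitSum v K T (v (i + 1)) - bitSum v K T (v i)|)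
    ⟨∅, by simp⟩ (by
      rw [Finset.sum_comm, Finset.sum_comm (t := Finset.range N)]
      refine Finset.sum_le_sum fun i hi => ?_
      exact average_bitSum hu v K N (i + 1) i (by have := Finset.mem_range.1 hi; omega)
        (Finset.mem_image.2 ⟨i, hi, rfl⟩))
  refine ⟨fun x => bitSum v K T x / 2, LipschitzWith.of_dist_le_mul fun x y => ?_, ?_⟩
  · have := abs_bitSum_sub_le hu v K T x y
    rw [Real.dist_eq, ← sub_div, abs_div, abs_two]
    simp only [NNReal.coe_one, one_mul]
    linarith
  · simp only [Real.dist_eq, ← sub_div, abs_div, abs_two]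
    rw [← Finset.sum_div] at hT ⊢
    linarith

/-- There is a universal constant `c > 0` such that on every separable ultrametric
space, `c ⬝ Var γ ≤ LVar γ` for every map `γ : [a,b] → M`; in particular
`LVar γ < ∞` implies `Var γ < ∞`. -/
theorem ultrametric_catches_jumps : ∃ c : ℝ, 0 < c ∧
    ∀ (M : Type) [MetricSpace M], TopologicalSpace.SeparableSpace M →
      (∀ x y z : M, dist x z ≤ max (dist x y) (dist y z)) →
      ∀ (a b : ℝ), a < b → ∀ γ : ℝ → M,
        ENNReal.ofReal c * Var a b γ ≤ LVar a b γ ∧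
        (LVar a b γ < ⊤ → Var a b γ < ⊤) := by
  refine ⟨1 / 8, by norm_num, fun M _ _ hu a b _ γ => ?_⟩
  have key : ENNReal.ofReal (1 / 8) * Var a b γ ≤ LVar a b γ := by
    unfold Var eVariationOn
    rw [ENNReal.mul_iSup]
    refine iSup_le fun p => ?_
    obtain ⟨f, hf, hle⟩ := exists_lipschitz_sum_le hu (fun i => γ (p.2.1 i)) p.1
    have h1 : Var a b (f ∘ γ) ≤ LVar a b γ :=
      le_iSup (fun f : {f : M → ℝ // LipschitzWith 1 f} => Var a b (f.1 ∘ γ)) ⟨f, hf⟩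
    refine le_trans ?_ h1
    refine le_trans ?_ (le_iSup (fun p : ℕ × { u : ℕ → ℝ // Monotone u ∧ ∀ i, u i ∈ Icc a b } =>
      ∑ i ∈ Finset.range p.1, edist ((f ∘ γ) (p.2.1 (i + 1))) ((f ∘ γ) (p.2.1 i))) p)
    simp only [edist_dist, Function.comp_apply]
    rw [← ENNReal.ofReal_sum_of_nonneg (fun _ _ => dist_nonneg),
      ← ENNReal.ofReal_sum_of_nonneg (fun _ _ => dist_nonneg),
      ← ENNReal.ofReal_mul (by norm_num)]
    exact ENNReal.ofReal_le_ofReal hle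
  refine ⟨key, fun h => ?_⟩
  exact ENNReal.lt_top_of_mul_ne_top_right (key.trans_lt h).ne (by simp)
end
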